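/- Let n ≥ 2. If the comodule category A_F of the normal triangular matrix comonad F is hereditary, then for all i < j and every epimorphism p : E_i ⟶ E_i' between injective objects of A_i, the morphism F_{ij}(p) is a split epimorphism. -/

import Mathlib

/-!
STATEMENT 15: Let `n ≥ 2`. If the category of comodules over a normal triangular
matrix comonad `F` on `A₁ × ⋯ × Aₙ` is hereditary, then for all `i < j` and every
epimorphism `p : E ⟶ E` between injective objects of `A_i`, the morphism
`F_{ij}(p)` is a split epimorphism.
-/

open CategoryTheory Limits

universe v u

variable {n : ℕ} {A : Fin n → Type u} [∀ i, Category.{v} (A i)]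
  [∀ i, Abelian (A i)] [∀ i, EnoughInjectives (A i)]
variable (F : ∀ ⦃i j : Fin n⦄, i < j → (A i ⥤ A j))
variable (δ : ∀ ⦃i k j : Fin n⦄ (h₁ : i < k) (h₂ : k < j), F (h₁.trans h₂) ⟶ F h₁ ⋙ F h₂)

/-- A comodule over the normal triangular matrix comonad determined by the data
`(F, δ)`. -/
structure Comod where
  X : ∀ i, A i
  d : ∀ {i j : Fin n} (h : i < j), X j ⟶ (F h).obj (X i)
  compat : ∀ {i k j : Fin n} (h₁ : i < k) (h₂ : k < j),
    d h₂ ≫ (F h₂).map (d h₁) = d (h₁.trans h₂) ≫ (δ h₁ h₂).app (X i)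

/-- Morphisms of comodules. -/
@[ext]
structure ComodHom (M N : Comod F δ) where
  f : ∀ i, M.X i ⟶ N.X i
  comm : ∀ {i j : Fin n} (h : i < j), f j ≫ N.d h = M.d h ≫ (F h).map (f i)

instance : Category (Comod F δ) where
  Hom M N := ComodHom F δ M N
  id M := ⟨fun i => 𝟙 (M.X i), fun h => by simp⟩
  comp f g := ⟨fun i => f.f i ≫ g.f i, fun h => by
    rw [Category.assoc, g.comm, ← Category.assoc, f.comm, Category.assoc, Functor.map_comp]⟩
  id_comp f := by apply ComodHom.ext; funext i; exact Category.id_comp _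
  comp_id f := by apply ComodHom.ext; funext i; exact Category.comp_id _
  assoc f g h := by apply ComodHom.ext; funext i; exact Category.assoc _ _ _

/-- A category is hereditary if for every epimorphism `e : E ⟶ X` with `E` injective,
`X` is also injective. -/
def Hereditary (C : Type*) [Category C] : Prop :=
  ∀ ⦃E X : C⦄ (e : E ⟶ X), Epi e → Injective E → Injective X

/-- The forgetful functor from comodules to `A₁ × ⋯ × Aₙ`. -/
def forgetComod : Comod F δ ⥤ (∀ i, A i) where
  obj M := M.X
  map f := f.f

/-!
An arrow `p : X ⟶ Y` of `A_i` gives a comodule `M(p)`: it is `Y` at `i`, `F_{ik}(X)` at `k > i` and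
`0` at `k < i`, with structure maps `F_{ik}(p)` and the components of `δ` at `X`. Maps into
`M(𝟙 X)` are the same as maps into `X` at the vertex `i`. Moreover a monomorphism of comodules is a
monomorphism at each vertex: the `F_{ij}` preserve pullbacks, so its kernel pair can be formed
vertexwise. Hence `M(𝟙 E)` is injective when `E` is.

An epimorphism `p : E ⟶ E'` yields an epimorphism `M(𝟙 E) ⟶ M(p)`, so `M(p)` is injective when
comodules are hereditary. Extending the canonical map `M(0 ⟶ E') ⟶ M(p)` along the monomorphism
`M(0 ⟶ E') ⟶ M(𝟙 E')` gives a map that is the identity at `i`, and its component at `j` is then a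
section of `F_{ij}(p)`.
-/

/-- The position of `k` relative to `i`. Families indexed by `k` that are defined by cases on this
type, rather than on a proposition, need no casts in the case `k = i`. -/
inductive Position {ι : Type*} [LT ι] (i : ι) : ι → Type _
  | below {k : ι} (h : k < i) : Position i k
  | self : Position i i
  | above {k : ι} (h : i < k) : Position i k

instance {ι : Type*} [Preorder ι] (i k : ι) : Subsingleton (Position i k) where
  allEq s t := by
    cases s <;> cases t <;> first | rfl | order

/-- The position of `k` relative to `i` in a linear order. -/
def position {ι : Type*} [LinearOrder ι] (i k : ι) : Position i k :=
  if h : i < k then .above h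
  else if h' : k < i then .below h'
  else le_antisymm (not_lt.1 h') (not_lt.1 h) ▸ .self

/-- Coassociativity of the comultiplication of a normal triangular matrix comonad. -/
class IsCoassociative {C : Fin n → Type u} [∀ i, Category.{v} (C i)]
    (G : ∀ ⦃i j : Fin n⦄, i < j → (C i ⥤ C j))
    (ε : ∀ ⦃i k j : Fin n⦄ (h₁ : i < k) (h₂ : k < j), G (h₁.trans h₂) ⟶ G h₁ ⋙ G h₂) : Prop where
  coassoc : ∀ ⦃i k l j : Fin n⦄ (h₁ : i < k) (h₂ : k < l) (h₃ : l < j) (X : C i),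
    (ε h₁ (h₂.trans h₃)).app X ≫ (ε h₂ h₃).app ((G h₁).obj X) =
      (ε (h₁.trans h₂) h₃).app X ≫ (G h₃).map ((ε h₁ h₂).app X)

namespace Comod

variable {C : Fin n → Type u} [∀ i, Category.{v} (C i)]
  {G : ∀ ⦃i j : Fin n⦄, i < j → (C i ⥤ C j)}
  {ε : ∀ ⦃i k j : Fin n⦄ (h₁ : i < k) (h₂ : k < j), G (h₁.trans h₂) ⟶ G h₁ ⋙ G h₂}

@[ext]
theorem hom_ext {M N : Comod G ε} {f g : M ⟶ N} (h : ∀ k, f.f k = g.f k) : f = g :=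
  ComodHom.ext (funext h)

@[simp]
theorem comp_f {M N K : Comod G ε} (f : M ⟶ N) (g : N ⟶ K) (k : Fin n) :
    (f ≫ g).f k = f.f k ≫ g.f k := rfl

theorem epi_of_epi_f {M N : Comod G ε} (f : M ⟶ N) (hf : ∀ k, Epi (f.f k)) : Epi f where
  left_cancellation a b w := by
    ext k
    rw [← cancel_epi (f.f k), ← comp_f, w, comp_f]

theorem mono_of_mono_f {M N : Comod G ε} (f : M ⟶ N) (hf : ∀ k, Mono (f.f k)) : Mono f where
  right_cancellation a b w := by
    ext k
    rw [← cancel_mono (f.f k), ← comp_f, w, comp_f]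

section KernelPair

variable [∀ i, HasPullbacks (C i)]
  [∀ ⦃i j : Fin n⦄ (h : i < j), PreservesLimitsOfShape WalkingCospan (G h)]
  {M N : Comod G ε} (f : M ⟶ N)

theorem isPullback_map_kernelPair {i j : Fin n} (h : i < j) :
    IsPullback ((G h).map (pullback.fst (f.f i) (f.f i))) ((G h).map (pullback.snd (f.f i) (f.f i)))
      ((G h).map (f.f i)) ((G h).map (f.f i)) :=
  (IsPullback.of_hasPullback (f.f i) (f.f i)).map (G h)

/-- The kernel pair of a morphism of comodules, formed at each vertex. -/
noncomputable def kernelPair : Comod G ε where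
  X k := pullback (f.f k) (f.f k)
  d h := (isPullback_map_kernelPair f h).lift (pullback.fst _ _ ≫ M.d h) (pullback.snd _ _ ≫ M.d h)
    (by simp only [Category.assoc, ← f.comm, pullback.condition_assoc])
  compat h₁ h₂ := by
    have naturality {X Y : C _} (g : X ⟶ Y) := (ε h₁ h₂).naturality g
    simp only [Functor.comp_map] at naturality
    apply ((isPullback_map_kernelPair f h₁).map (G h₂)).hom_ext
    all_goals
      simp only [Category.assoc, ← Functor.map_comp, IsPullback.lift_fst, IsPullback.lift_snd,
        ← naturality]
      simp only [Functor.map_comp, IsPullback.lift_fst_assoc, IsPullback.lift_snd_assoc,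
        Category.assoc, M.compat]

/-- The first projection of the kernel pair. -/
noncomputable def kernelPairFst : kernelPair f ⟶ M :=
  ComodHom.mk (M := kernelPair f) (fun k => pullback.fst (f.f k) (f.f k))
    fun _ => (IsPullback.lift_fst _ _ _ _).symm

/-- The second projection of the kernel pair. -/
noncomputable def kernelPairSnd : kernelPair f ⟶ M :=
  ComodHom.mk (M := kernelPair f) (fun k => pullback.snd (f.f k) (f.f k))
    fun _ => (IsPullback.lift_snd _ _ _ _).symm

theorem mono_f [Mono f] (k : Fin n) : Mono (f.f k) := by
  have condition : kernelPairFst f ≫ f = kernelPairSnd f ≫ f := hom_ext fun _ => pullback.condition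
  have fst_eq_snd : kernelPairFst f = kernelPairSnd f := (cancel_mono f).1 condition
  exact (mono_iff_fst_eq_snd (IsPullback.of_hasPullback (f.f k) (f.f k)).isLimit).2
    (congrArg (fun g => ComodHom.f g k) fst_eq_snd)

end KernelPair

open ZeroObject

variable [∀ i, HasZeroObject (C i)] [∀ i, HasZeroMorphisms (C i)] {i : Fin n}

section Components

variable (G)

/-- The underlying family of the comodule of an arrow `X ⟶ Y` of `C i`. -/
noncomputable def arrowObj (X Y : C i) : ∀ {k : Fin n}, Position i k → C k
  | _, .below _ => 0
  | _, .self => Y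
  | _, .above h => (G h).obj X

variable (ε)

/-- The structure maps of the comodule of an arrow of `C i`. The last case does not occur,
since `i ≤ k` and `k < l` force `i < l`. -/
noncomputable def arrowCoaction {X Y : C i} (p : X ⟶ Y) : ∀ {k l : Fin n} (h : k < l)
    (s : Position i k) (t : Position i l), arrowObj G X Y t ⟶ (G h).obj (arrowObj G X Y s)
  | _, _, _, .below _, _ => 0
  | _, _, h, .self, .above _ => (G h).map p
  | _, _, h, .above hk, .above _ => (ε hk h).app X
  | _, _, _, _, _ => 0

@[simp]
theorem arrowCoaction_below {X Y : C i} (p : X ⟶ Y) {k l : Fin n} (h : k < l) (hk : k < i)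
    (t : Position i l) : arrowCoaction G ε p h (.below hk) t = 0 := rfl

theorem arrowCoaction_self {X Y : C i} (p : X ⟶ Y) {l : Fin n} (h : i < l) :
    arrowCoaction G ε p h .self (.above h) = (G h).map p := rfl

theorem isIso_arrowCoaction_id (X : C i) {l : Fin n} (h : i < l) (s : Position i i)
    (t : Position i l) : IsIso (arrowCoaction G ε (𝟙 X) h s t) := by
  obtain rfl : s = .self := Subsingleton.elim _ _
  obtain rfl : t = .above h := Subsingleton.elim _ _
  rw [arrowCoaction_self]
  exact (G h).map_isIso (𝟙 X)

theorem isSplitEpi_map_of_isSplitEpi_arrowCoaction {X Y : C i} (p : X ⟶ Y) {l : Fin n} (h : i < l)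
    (s : Position i i) (t : Position i l) (hp : IsSplitEpi (arrowCoaction G ε p h s t)) :
    IsSplitEpi ((G h).map p) := by
  obtain rfl : s = .self := Subsingleton.elim _ _
  obtain rfl : t = .above h := Subsingleton.elim _ _
  rwa [← arrowCoaction_self G ε p h]

/-- The components of the morphism of comodules induced by a square of arrows of `C i`. -/
noncomputable def arrowApp {X Y X' Y' : C i} (a : X ⟶ X') (b : Y ⟶ Y') : ∀ {k : Fin n}
    (s : Position i k), arrowObj G X Y s ⟶ arrowObj G X' Y' s
  | _, .below _ => 0
  | _, .self => b
  | _, .above h => (G h).map a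

theorem isIso_arrowApp {X Y X' Y' : C i} (a : X ⟶ X') (b : Y ⟶ Y') [IsIso b] (s : Position i i) :
    IsIso (arrowApp G a b s) := by
  obtain rfl : s = .self := Subsingleton.elim _ _
  assumption

theorem epi_arrowApp {X Y X' Y' : C i} (a : X ⟶ X') (b : Y ⟶ Y') [Epi b]
    (ha : ∀ ⦃k : Fin n⦄ (h : i < k), Epi ((G h).map a)) {k : Fin n} (s : Position i k) :
    Epi (arrowApp G a b s) := by
  cases s with
  | below _ => exact ⟨fun _ _ _ => (isZero_zero _).eq_of_src _ _⟩
  | self => assumption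
  | above h => exact ha h

theorem mono_arrowApp {X Y X' Y' : C i} (a : X ⟶ X') (b : Y ⟶ Y') [Mono b]
    (ha : ∀ ⦃k : Fin n⦄ (h : i < k), Mono ((G h).map a)) {k : Fin n} (s : Position i k) :
    Mono (arrowApp G a b s) := by
  cases s with
  | below _ => exact ⟨fun _ _ _ => (isZero_zero _).eq_of_tgt _ _⟩
  | self => assumption
  | above h => exact ha h

theorem arrowApp_comm {X Y X' Y' : C i} {p : X ⟶ Y} {q : X' ⟶ Y'} {a : X ⟶ X'} {b : Y ⟶ Y'}
    (w : a ≫ q = p ≫ b) {k l : Fin n} (h : k < l) (s : Position i k) (t : Position i l) :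
    arrowApp G a b t ≫ arrowCoaction G ε q h s t =
      arrowCoaction G ε p h s t ≫ (G h).map (arrowApp G a b s) := by
  cases s with
  | below _ => simp
  | self =>
    obtain rfl : t = .above h := Subsingleton.elim _ _
    change (G h).map a ≫ (G h).map q = (G h).map p ≫ (G h).map b
    simp only [← Functor.map_comp, w]
  | above hk =>
    obtain rfl : t = .above (hk.trans h) := Subsingleton.elim _ _
    exact (ε hk h).naturality a

end Components

/-- The components of the morphism from `N` to the cofree comodule on `X` that corresponds to
`t : N.X i ⟶ X`. -/
noncomputable def coextendApp {X : C i} (N : Comod G ε) (t : N.X i ⟶ X) : ∀ {k : Fin n}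
    (s : Position i k), N.X k ⟶ arrowObj G X X s
  | _, .below _ => 0
  | _, .self => t
  | _, .above h => N.d h ≫ (G h).map t

theorem exists_comp_coextendApp_eq {X : C i} [Injective X] {M N : Comod G ε} (f : M ⟶ N)
    [Mono (f.f i)] (s : Position i i) (g : M.X i ⟶ arrowObj G X X s) :
    ∃ t, f.f i ≫ coextendApp N t s = g := by
  obtain rfl : s = .self := Subsingleton.elim _ _
  exact ‹Injective X›.factors g (f.f i)

variable [∀ ⦃i j : Fin n⦄ (h : i < j), (G h).PreservesZeroMorphisms]

theorem coextendApp_comm {X : C i} (N : Comod G ε) (t : N.X i ⟶ X) {k l : Fin n} (h : k < l)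
    (s : Position i k) (r : Position i l) :
    coextendApp N t r ≫ arrowCoaction G ε (𝟙 X) h s r =
      N.d h ≫ (G h).map (coextendApp N t s) := by
  cases s with
  | below _ => simp [coextendApp]
  | self =>
    obtain rfl : r = .above h := Subsingleton.elim _ _
    change (N.d h ≫ (G h).map t) ≫ (G h).map (𝟙 X) = N.d h ≫ (G h).map t
    rw [CategoryTheory.Functor.map_id, Category.comp_id]
  | above hk =>
    obtain rfl : r = .above (hk.trans h) := Subsingleton.elim _ _
    have naturality := (ε hk h).naturality t
    simp only [Functor.comp_map] at naturality
    change (N.d _ ≫ (G _).map t) ≫ (ε hk h).app X = N.d h ≫ (G h).map (N.d hk ≫ (G hk).map t)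
    rw [Category.assoc, naturality, Functor.map_comp, reassoc_of% N.compat hk h]

variable [IsCoassociative G ε]

section OfArrow

variable (G ε)

/-- The comodule of an arrow `p : X ⟶ Y` of `C i`: it is `Y` at `i`, `G_{ik}(X)` at `k > i` and `0`
at `k < i`. For `p = 𝟙 X` it is the cofree comodule on `X`. -/
noncomputable def ofArrow {X Y : C i} (p : X ⟶ Y) : Comod G ε where
  X k := arrowObj G X Y (position i k)
  d {k l} h := arrowCoaction G ε p h (position i k) (position i l)
  compat {k l m} h₁ h₂ := by
    generalize position i k = s, position i l = t, position i m = r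
    cases s with
    | below _ => simp
    | self =>
      obtain rfl : t = .above h₁ := Subsingleton.elim _ _
      obtain rfl : r = .above (h₁.trans h₂) := Subsingleton.elim _ _
      exact ((ε h₁ h₂).naturality p).symm
    | above hk =>
      obtain rfl : t = .above (hk.trans h₁) := Subsingleton.elim _ _
      obtain rfl : r = .above ((hk.trans h₁).trans h₂) := Subsingleton.elim _ _
      exact (IsCoassociative.coassoc hk h₁ h₂ X).symm

/-- The morphism of comodules induced by a commutative square of arrows of `C i`. -/
noncomputable def ofArrowMap {X Y X' Y' : C i} {p : X ⟶ Y} {q : X' ⟶ Y'} (a : X ⟶ X')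
    (b : Y ⟶ Y') (w : a ≫ q = p ≫ b) : ofArrow G ε p ⟶ ofArrow G ε q :=
  ComodHom.mk (M := ofArrow G ε p) (N := ofArrow G ε q) (fun k => arrowApp G a b (position i k))
    fun h => arrowApp_comm G ε w h _ _

theorem epi_ofArrowMap {X Y X' Y' : C i} {p : X ⟶ Y} {q : X' ⟶ Y'} (a : X ⟶ X') (b : Y ⟶ Y')
    (w : a ≫ q = p ≫ b) [Epi b] (ha : ∀ ⦃k : Fin n⦄ (h : i < k), Epi ((G h).map a)) :
    Epi (ofArrowMap G ε a b w) :=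
  epi_of_epi_f _ fun k => epi_arrowApp G a b ha (position i k)

theorem mono_ofArrowMap {X Y X' Y' : C i} {p : X ⟶ Y} {q : X' ⟶ Y'} (a : X ⟶ X') (b : Y ⟶ Y')
    (w : a ≫ q = p ≫ b) [Mono b] (ha : ∀ ⦃k : Fin n⦄ (h : i < k), Mono ((G h).map a)) :
    Mono (ofArrowMap G ε a b w) :=
  mono_of_mono_f _ fun k => mono_arrowApp G a b ha (position i k)

end OfArrow

/-- The morphism from `N` to the cofree comodule on `X` that corresponds to `t : N.X i ⟶ X`. -/
noncomputable def coextend {X : C i} (N : Comod G ε) (t : N.X i ⟶ X) : N ⟶ ofArrow G ε (𝟙 X) :=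
  ComodHom.mk (N := ofArrow G ε (𝟙 X)) (fun k => coextendApp N t (position i k))
    fun h => coextendApp_comm N t h _ _

instance isIso_ofArrow_id_d {X : C i} {l : Fin n} (h : i < l) :
    IsIso ((ofArrow G ε (𝟙 X)).d h) :=
  isIso_arrowCoaction_id G ε X h _ _

theorem isZero_ofArrow_X {X Y : C i} (p : X ⟶ Y) {k : Fin n} (h : k < i) :
    IsZero ((ofArrow G ε p).X k) := by
  change IsZero (arrowObj G X Y (position i k))
  rw [Subsingleton.elim (position i k) (.below h)]
  exact isZero_zero _

theorem hom_ext_ofArrow_id {X : C i} {N : Comod G ε} {f g : N ⟶ ofArrow G ε (𝟙 X)}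
    (h : f.f i = g.f i) : f = g := by
  ext k
  rcases lt_trichotomy i k with hk | rfl | hk
  · rw [← cancel_mono ((ofArrow G ε (𝟙 X)).d hk), f.comm, g.comm, h]
  · exact h
  · exact (isZero_ofArrow_X _ hk).eq_of_tgt _ _

theorem injective_ofArrow_id [∀ i, HasPullbacks (C i)]
    [∀ ⦃i j : Fin n⦄ (h : i < j), PreservesLimitsOfShape WalkingCospan (G h)]
    (X : C i) [Injective X] : Injective (ofArrow G ε (𝟙 X)) where
  factors {_ N} g f _ := by
    have := mono_f f i
    obtain ⟨t, ht⟩ := exists_comp_coextendApp_eq f (position i i) (g.f i)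
    exact ⟨coextend N t, hom_ext_ofArrow_id ht⟩

theorem isSplitEpi_map_of_injective_ofArrow {X Y : C i} (p : X ⟶ Y) [Injective (ofArrow G ε p)]
    {j : Fin n} (h : i < j) : IsSplitEpi ((G h).map p) := by
  let inclusion : ofArrow G ε (0 : 0 ⟶ Y) ⟶ ofArrow G ε (𝟙 Y) := ofArrowMap G ε 0 (𝟙 Y) rfl
  let toArrow : ofArrow G ε (0 : 0 ⟶ Y) ⟶ ofArrow G ε p := ofArrowMap G ε 0 (𝟙 Y) (by simp)
  have : Mono inclusion := mono_ofArrowMap G ε _ _ _ fun _ h =>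
    ⟨fun _ _ _ => ((G h).map_isZero (isZero_zero _)).eq_of_tgt _ _⟩
  let r : ofArrow G ε (𝟙 Y) ⟶ ofArrow G ε p := Injective.factorThru toArrow inclusion
  have fac : inclusion.f i ≫ r.f i = toArrow.f i := by
    rw [← comp_f, Injective.comp_factorThru]
  have : IsIso (inclusion.f i) := isIso_arrowApp G _ _ _
  have : IsIso (toArrow.f i) := isIso_arrowApp G _ _ _
  have : IsIso (r.f i) := IsIso.of_isIso_fac_left fac
  have split_d : IsSplitEpi ((ofArrow G ε p).d h) :=
    IsSplitEpi.mk' ⟨inv ((ofArrow G ε (𝟙 Y)).d h ≫ (G h).map (r.f i)) ≫ r.f j, by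
      rw [Category.assoc, r.comm, IsIso.inv_hom_id]⟩
  exact isSplitEpi_map_of_isSplitEpi_arrowCoaction G ε p h (position i i) (position i j)
    split_d

end Comod

theorem stmt_15_general {C : Fin n → Type u} [∀ i, Category.{v} (C i)]
    [∀ i, HasZeroObject (C i)] [∀ i, HasZeroMorphisms (C i)] [∀ i, HasPullbacks (C i)]
    (G : ∀ ⦃i j : Fin n⦄, i < j → (C i ⥤ C j))
    (ε : ∀ ⦃i k j : Fin n⦄ (h₁ : i < k) (h₂ : k < j), G (h₁.trans h₂) ⟶ G h₁ ⋙ G h₂)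
    [IsCoassociative G ε]
    [∀ ⦃i j : Fin n⦄ (h : i < j), (G h).PreservesZeroMorphisms]
    [∀ ⦃i j : Fin n⦄ (h : i < j), PreservesLimitsOfShape WalkingCospan (G h)]
    (hereditary : Hereditary (Comod G ε)) {i j : Fin n} (hij : i < j)
    {E X : C i} [Injective E] (p : E ⟶ X) [Epi p] :
    IsSplitEpi ((G hij).map p) := by
  have : Epi (Comod.ofArrowMap G ε (p := 𝟙 E) (q := p) (𝟙 E) p rfl) :=
    Comod.epi_ofArrowMap G ε _ _ _ fun _ _ => inferInstance
  have : Injective (Comod.ofArrow G ε p) := hereditary _ this (Comod.injective_ofArrow_id E)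
  exact Comod.isSplitEpi_map_of_injective_ofArrow (ε := ε) p hij

theorem stmt_15 (hn : 2 ≤ n)
    (hδ : ∀ ⦃i k l j : Fin n⦄ (h₁ : i < k) (h₂ : k < l) (h₃ : l < j) (X : A i),
      (δ h₁ (h₂.trans h₃)).app X ≫ (δ h₂ h₃).app ((F h₁).obj X) =
        (δ (h₁.trans h₂) h₃).app X ≫ (F h₃).map ((δ h₁ h₂).app X))
    (hadd : ∀ ⦃i j : Fin n⦄ (h : i < j), (F h).Additive)
    (hlex : ∀ ⦃i j : Fin n⦄ (h : i < j), PreservesFiniteLimits (F h))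
    (hH : Hereditary (Comod F δ))
    ⦃i j : Fin n⦄ (hij : i < j)
    (E E' : A i) (p : E ⟶ E') (hp : Epi p)
    (hE : Injective E) (hE' : Injective E') :
    IsSplitEpi ((F hij).map p) := by
  have : IsCoassociative F δ := ⟨hδ⟩
  exact stmt_15_general F δ hH hij p
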